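/- Let k ≥ 1. For every function u : {1,…,y−1} → ℕ, every permutation σ of {0,1,…,k}, and all natural numbers a_0,…,a_k, the number of tuples P ∈ P^k(T,B) with u_s(P) = u(s) for all 1 ≤ s ≤ y−1 and h_i(P) = a_i for all 0 ≤ i ≤ k equals the number of tuples P ∈ P^k(T,B) with u_s(P) = u(s) for all 1 ≤ s ≤ y−1 and h_i(P) = a_{σ(i)} for all 0 ≤ i ≤ k. -/

import Mathlib

/-- A path `P` lies in `P(T,B)`: it is weakly increasing (monotone) and lies
weakly between the boundaries `B` and `T`. -/
def InP {x y : ℕ} (T B P : Fin x → Fin (y+1)) : Prop :=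
  Monotone P ∧ ∀ j, B j ≤ P j ∧ P j ≤ T j

/-- A `k`-tuple of paths lies in `P^k(T,B)`: every path lies in `P(T,B)` and
each path lies weakly above the next one. -/
def InPk {x y k : ℕ} (T B : Fin x → Fin (y+1)) (P : Fin k → Fin x → Fin (y+1)) : Prop :=
  (∀ i, InP T B (P i)) ∧
  ∀ (i : Fin k) (hi : (i : ℕ) + 1 < k) (j : Fin x), P ⟨(i : ℕ) + 1, hi⟩ j ≤ P i j

/-- The extended tuple, with the conventions `P_0 = T` and `P_{k+1} = B`. -/
def extP {x y k : ℕ} (T B : Fin x → Fin (y+1)) (P : Fin k → Fin x → Fin (y+1))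
    (i : Fin (k+2)) : Fin x → Fin (y+1) :=
  if h0 : (i : ℕ) = 0 then T
  else if hk1 : (i : ℕ) = k + 1 then B
  else P ⟨(i : ℕ) - 1, by have := i.isLt; omega⟩

/-- `hstat T B P i` is the number of east steps shared by `P_i` and `P_{i+1}`. -/
noncomputable def hstat {x y k : ℕ} (T B : Fin x → Fin (y+1))
    (P : Fin k → Fin x → Fin (y+1)) (i : Fin (k+1)) : ℕ :=
  Nat.card {j : Fin x // extP T B P i.castSucc j = extP T B P i.succ j}

/-- `ustat T B P s` (for `s : Fin (y-1)` representing `s+1 ∈ {1,…,y-1}`) is the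
number of east steps at height `y-(s+1)` lying strictly between `T` and `B`
that are used by none of the paths of `P`. -/
noncomputable def ustat {x y k : ℕ} (T B : Fin x → Fin (y+1))
    (P : Fin k → Fin x → Fin (y+1)) (s : Fin (y-1)) : ℕ :=
  Nat.card {j : Fin x // (B j : ℕ) < y - ((s : ℕ) + 1) ∧ y - ((s : ℕ) + 1) < (T j : ℕ) ∧
      ∀ i : Fin k, (P i j : ℕ) ≠ y - ((s : ℕ) + 1)}

section SymGF
variable {K : Type*} [CommRing K]

def wt (T B : ℕ → ℕ) (X Y : K) (z : ℕ → K) (p s : ℕ) : K :=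
  if s = T p then (if s = B p then X * Y else X)
  else if s = B p then Y else if B p < s ∧ s < T p then z s else 0

def GG (w : ℕ → ℕ → K) : ℕ → ℕ → K
  | 0, _ => 1
  | _ + 1, 0 => 0
  | p + 1, s + 1 => GG w (p+1) s + w p s * GG w p (s+1)

theorem GG_zero_of_le (T B : ℕ → ℕ) (X Y : K) (z : ℕ → K) (hTB : ∀ j, B j ≤ T j) (p : ℕ) :
    ∀ s, s ≤ B p → GG (wt T B X Y z) (p+1) s = 0 := by
  intro s
  induction s with
  | zero => intro _; simp [GG]
  | succ s ih =>
    intro h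
    have h1 := hTB p
    rw [GG, ih (by omega)]
    have : wt T B X Y z p s = 0 := by
      unfold wt
      rw [if_neg (by omega), if_neg (by omega), if_neg (by omega)]
    rw [this]; ring

theorem GG_sym_aux (T B : ℕ → ℕ) (X Y : K) (z : ℕ → K) (hT : Monotone T) (hB : Monotone B)
    (hTB : ∀ j, B j ≤ T j) : ∀ s p : ℕ,
    ((∀ q, p = q + 1 → T q < s) → GG (wt T B Y X z) p s = GG (wt T B X Y z) p s) ∧
    ((B p < s ∧ s ≤ T p) → GG (wt T B Y X z) (p+1) s - X * GG (wt T B Y X z) p s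
        = GG (wt T B X Y z) (p+1) s - Y * GG (wt T B X Y z) p s) := by
  intro s
  induction s with
  | zero =>
    intro p
    refine ⟨fun h => ?_, fun h => by omega⟩
    cases p with
    | zero => simp [GG]
    | succ q => exact absurd (h q rfl) (by omega)
  | succ s ihs =>
    have e0 : ∀ q, T q < s → ∀ X Y : K, wt T B X Y z q s = 0 := fun q h1 X Y => by
      have := hTB q
      unfold wt; rw [if_neg (by omega), if_neg (by omega), if_neg (by omega)]
    have eX : ∀ q, T q = s → B q < s → ∀ X Y : K, wt T B X Y z q s = X := fun q h1 h2 X Y => by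
      unfold wt; rw [if_pos (by omega), if_neg (by omega)]
    have eXY : ∀ q, T q = s → B q = s → ∀ X Y : K, wt T B X Y z q s = X * Y :=
      fun q h1 h2 X Y => by
        unfold wt; rw [if_pos (by omega), if_pos (by omega)]
    have eY : ∀ q, s < T q → B q = s → ∀ X Y : K, wt T B X Y z q s = Y := fun q h1 h2 X Y => by
      unfold wt; rw [if_neg (by omega), if_pos (by omega)]
    have ez : ∀ q, s < T q → B q < s → ∀ X Y : K, wt T B X Y z q s = z s := fun q h1 h2 X Y => by
      unfold wt; rw [if_neg (by omega), if_neg (by omega), if_pos (by omega)]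
    have key : ∀ p, (∀ q, p = q + 1 → T q < s+1) →
        GG (wt T B Y X z) p (s+1) = GG (wt T B X Y z) p (s+1) := by
      intro p
      induction p using Nat.strong_induction_on with
      | _ p ih =>
      intro h
      cases p with
      | zero => simp [GG]
      | succ q =>
        have hq := h q rfl
        have hm : ∀ r, r < q → T r < s + 1 := fun r hr => by
          have := hT hr.le; omega
        have ihq := ih q (by omega) (fun r hr => hm r (by omega))
        have hTBq := hTB q
        rcases lt_trichotomy (T q) s with h1 | h1 | h1
        · have c1 := (ihs (q+1)).1 (fun r hr => by
            have : r = q := by omega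
            rw [this]; exact h1)
          rw [GG, GG, e0 q h1, e0 q h1, c1]
          ring
        · rcases eq_or_lt_of_le hTBq with h2 | h2
          · rw [GG, GG, eXY q h1 (by omega), eXY q h1 (by omega),
              GG_zero_of_le T B X Y z hTB q s (by omega),
              GG_zero_of_le T B Y X z hTB q s (by omega), ihq]
            ring
          · have c2 := (ihs q).2 (by omega)
            rw [GG, GG, eX q h1 (by omega), eX q h1 (by omega), ihq]
            cases q with
            | zero => simp only [GG] at c2 ⊢; linear_combination c2
            | succ r =>
              have hr := hm r (by omega)
              have hBr := hB (show r ≤ r+1 by omega)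
              have ihr := ih r (by omega) (fun t ht => hm t (by omega))
              rcases lt_or_eq_of_le (show T r ≤ s by omega) with h3 | h3
              · have g1 : GG (wt T B X Y z) (r+1) (s+1) = _ := GG.eq_3 _ r s
                have g2 : GG (wt T B Y X z) (r+1) (s+1) = _ := GG.eq_3 _ r s
                rw [e0 r h3] at g1 g2
                rw [ihq] at g2
                linear_combination c2 + Y * g1 - X * g2
              · have g1 : GG (wt T B X Y z) (r+1) (s+1) = _ := GG.eq_3 _ r s
                have g2 : GG (wt T B Y X z) (r+1) (s+1) = _ := GG.eq_3 _ r s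
                rw [eX r h3 (by omega)] at g1 g2
                rw [ihq, ihr] at g2
                linear_combination c2 + Y * g1 - X * g2
        · omega
    intro p
    refine ⟨key p, ?_⟩
    induction p with
    | zero =>
      rintro ⟨h1, h2⟩
      rcases lt_or_eq_of_le (show B 0 ≤ s by omega) with h3 | h3
      · have c2 := (ihs 0).2 (by omega)
        rw [GG.eq_3, GG.eq_3, ez 0 (by omega) h3, ez 0 (by omega) h3]
        simp only [GG] at c2 ⊢
        linear_combination c2
      · rw [GG.eq_3, GG.eq_3, eY 0 (by omega) h3, eY 0 (by omega) h3,
          GG_zero_of_le T B X Y z hTB 0 s (by omega),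
          GG_zero_of_le T B Y X z hTB 0 s (by omega)]
        ring
    | succ q ih =>
      rintro ⟨h1, h2⟩
      rcases lt_or_eq_of_le (show B (q+1) ≤ s by omega) with h3 | h3
      · have c2 := (ihs (q+1)).2 (by omega)
        have hBq := hB (show q ≤ q+1 by omega)
        have f1 : GG (wt T B X Y z) (q+1+1) (s+1) = _ := GG.eq_3 _ (q+1) s
        have f2 : GG (wt T B Y X z) (q+1+1) (s+1) = _ := GG.eq_3 _ (q+1) s
        have g1 : GG (wt T B X Y z) (q+1) (s+1) = _ := GG.eq_3 _ q s
        have g2 : GG (wt T B Y X z) (q+1) (s+1) = _ := GG.eq_3 _ q s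
        rw [ez (q+1) (by omega) h3] at f1 f2
        rcases lt_or_ge s (T q) with h4 | h4
        · have c3 := ih (by omega)
          rw [ez q h4 (by omega)] at g1 g2
          linear_combination c2 + z s * c3 + f2 - f1 - X * g2 + Y * g1
        · have k1 := key (q+1) (fun r hr => by
            have : r = q := by omega
            rw [this]; omega)
          have k2 := key q (fun r hr => by
            have := hT (show r ≤ q by omega)
            omega)
          rcases lt_or_eq_of_le h4 with h5 | h5
          · rw [e0 q h5] at g1 g2
            linear_combination c2 + f2 - f1 - X * g2 + Y * g1 + z s * k1
          · rw [eX q h5 (by omega)] at g1 g2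
            linear_combination c2 + f2 - f1 - X * g2 + Y * g1 + z s * k1 - X * Y * k2
      · have f1 : GG (wt T B X Y z) (q+1+1) (s+1) = _ := GG.eq_3 _ (q+1) s
        have f2 : GG (wt T B Y X z) (q+1+1) (s+1) = _ := GG.eq_3 _ (q+1) s
        rw [eY (q+1) (by omega) h3, GG_zero_of_le T B X Y z hTB (q+1) s (by omega)] at f1
        rw [eY (q+1) (by omega) h3, GG_zero_of_le T B Y X z hTB (q+1) s (by omega)] at f2
        linear_combination f2 - f1

theorem GG_eq_sum (w : ℕ → ℕ → K) (n : ℕ) : ∀ p s : ℕ, s ≤ n → GG w p s =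
    ∑ h ∈ (Finset.univ : Finset (Fin p → Fin n)).filter
      (fun h : Fin p → Fin n => Monotone h ∧ ∀ j, (h j : ℕ) < s), ∏ j : Fin p, w j (h j) := by
  intro p
  induction p with
  | zero =>
    intro s _
    have : (Finset.univ : Finset (Fin 0 → Fin n)).filter
      (fun h : Fin 0 → Fin n => Monotone h ∧ ∀ j, (h j : ℕ) < s) = Finset.univ := by
      apply Finset.filter_true_of_mem
      intro h _
      exact ⟨fun i => i.elim0, fun i => i.elim0⟩
    rw [this]
    simp [GG]
  | succ p ihp =>
    intro s
    induction s with
    | zero =>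
      intro _
      rw [Finset.sum_eq_zero]
      · simp [GG]
      · intro h hh
        have := (Finset.mem_filter.1 hh).2.2 0
        omega
    | succ s ihs =>
      intro hs
      rw [GG, ihs (by omega), ihp (s+1) hs, Finset.mul_sum]
      rw [← Finset.sum_filter_add_sum_filter_not
        ((Finset.univ : Finset (Fin (p+1) → Fin n)).filter
          (fun h : Fin (p+1) → Fin n => Monotone h ∧ ∀ j, (h j : ℕ) < s+1)) (fun h : Fin (p+1) → Fin n => (h (Fin.last p) : ℕ) < s)]
      congr 1
      · apply Finset.sum_congr _ (fun _ _ => rfl)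
        ext h
        simp only [Finset.mem_filter, Finset.mem_univ, true_and]
        constructor
        · rintro ⟨h1, h2⟩
          exact ⟨⟨h1, fun j => (h2 j).trans (by omega)⟩, h2 _⟩
        · rintro ⟨⟨h1, h2⟩, h3⟩
          exact ⟨h1, fun j => lt_of_le_of_lt (h1 (Fin.le_last j)) h3⟩
      · symm
        refine Finset.sum_nbij' (fun h => Fin.init h)
          (fun h => Fin.snoc (α := fun _ => Fin n) h (⟨s, hs⟩ : Fin n)) ?_ ?_ ?_ ?_ ?_
        · intro h
          simp only [Finset.mem_filter, Finset.mem_univ, true_and]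
          rintro ⟨⟨h1, h2⟩, h3⟩
          exact ⟨fun i j hij => h1 (by simpa using hij), fun j => h2 _⟩
        · intro h
          simp only [Finset.mem_filter, Finset.mem_univ, true_and]
          rintro ⟨h1, h2⟩
          refine ⟨⟨?_, ?_⟩, by simp⟩
          · intro i j hij
            induction j using Fin.lastCases with
            | last =>
              induction i using Fin.lastCases with
              | last => exact le_rfl
              | cast i =>
                rw [Fin.snoc_last, Fin.snoc_castSucc, Fin.le_def]
                have := h2 i
                simp only
                omega
            | cast j =>
              induction i using Fin.lastCases with
              | last => exact absurd hij (by simp [Fin.le_def])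
              | cast i =>
                rw [Fin.snoc_castSucc, Fin.snoc_castSucc]
                exact h1 (by simpa using hij)
          · intro j
            induction j using Fin.lastCases with
            | last => simp
            | cast j => simpa using h2 j
        · intro h
          simp only [Finset.mem_filter, Finset.mem_univ, true_and]
          rintro ⟨⟨h1, h2⟩, h3⟩
          have : (⟨s, hs⟩ : Fin n) = h (Fin.last p) := by
            ext
            have := h2 (Fin.last p)
            simp only
            omega
          rw [this, Fin.snoc_init_self]
        · intro h _
          simp
        · intro h
          simp only [Finset.mem_filter, Finset.mem_univ, true_and]
          rintro ⟨⟨h1, h2⟩, h3⟩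
          have : (h (Fin.last p) : ℕ) = s := by
            have := h2 (Fin.last p)
            omega
          rw [Fin.prod_univ_castSucc, mul_comm]
          simp [this, Fin.init]
end SymGF

abbrev StM := ℕ × ℕ × (ℕ → ℕ)

noncomputable def mo (m : StM) : AddMonoidAlgebra ℤ StM := AddMonoidAlgebra.single m 1

theorem mo_mul (a b : StM) : mo a * mo b = mo (a + b) := by
  unfold mo; rw [AddMonoidAlgebra.single_mul_single]; simp

theorem mo_prod {ι : Type*} (s : Finset ι) (f : ι → StM) :
    ∏ i ∈ s, mo (f i) = mo (∑ i ∈ s, f i) := by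
  classical
  induction s using Finset.induction_on with
  | empty => rfl
  | insert a s ha ih => rw [Finset.prod_insert ha, Finset.sum_insert ha, ih, mo_mul]

def stw (t b s : ℕ) : StM :=
  (if s = t then 1 else 0, if s = b then 1 else 0, if b < s ∧ s < t then Pi.single s 1 else 0)

def stw' (t b s : ℕ) : StM :=
  (if s = b then 1 else 0, if s = t then 1 else 0, if b < s ∧ s < t then Pi.single s 1 else 0)

theorem wt_stw (T B : ℕ → ℕ) (p s : ℕ) (h : B p ≤ T p) :
    wt T B (mo (1,0,0)) (mo (0,1,0)) (fun s => mo (0,0,Pi.single s 1)) p s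
    = if B p ≤ s ∧ s ≤ T p then mo (stw (T p) (B p) s) else 0 := by
  unfold wt stw
  split_ifs <;> first | omega | simp [mo_mul]

theorem wt_stw' (T B : ℕ → ℕ) (p s : ℕ) (h : B p ≤ T p) :
    wt T B (mo (0,1,0)) (mo (1,0,0)) (fun s => mo (0,0,Pi.single s 1)) p s
    = if B p ≤ s ∧ s ≤ T p then mo (stw' (T p) (B p) s) else 0 := by
  unfold wt stw'
  split_ifs <;> first | omega | simp [mo_mul]

theorem coeff_GG {x y : ℕ} (T B : ℕ → ℕ) (w : ℕ → ℕ → AddMonoidAlgebra ℤ StM)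
    (f : ℕ → ℕ → ℕ → StM)
    (hw : ∀ p s, w p s = if B p ≤ s ∧ s ≤ T p then mo (f (T p) (B p) s) else 0) (m : StM) :
    (GG w x (y+1)).coeff m = (Nat.card {h : Fin x → Fin (y+1) //
      (Monotone h ∧ ∀ j : Fin x, B j ≤ h j ∧ h j ≤ T j) ∧ ∑ j : Fin x, f (T j) (B j) (h j) = m} : ℤ) := by
  classical
  rw [GG_eq_sum w (y+1) x (y+1) le_rfl, AddMonoidAlgebra.coeff_sum, Finsupp.finsetSum_apply,
    Nat.card_eq_fintype_card, Fintype.card_subtype, Finset.card_filter, Finset.sum_filter]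
  push_cast
  refine Finset.sum_congr rfl fun h _ => ?_
  by_cases h1 : Monotone h
  · have h0 : ∀ j, (h j : ℕ) < y + 1 := fun j => (h j).isLt
    rw [if_pos ⟨h1, h0⟩]
    by_cases h2 : ∀ j : Fin x, B j ≤ h j ∧ h j ≤ T j
    · have : ∏ j : Fin x, w j (h j) = mo (∑ j : Fin x, f (T j) (B j) (h j)) := by
        rw [← mo_prod]
        exact Finset.prod_congr rfl fun j _ => by rw [hw, if_pos (h2 j)]
      rw [this]
      simp only [mo, AddMonoidAlgebra.coeff_single, Finsupp.single_apply]
      simp [h1, h2]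
    · have h2' := h2
      push Not at h2'
      obtain ⟨j, hj⟩ := h2'
      have : ∏ j : Fin x, w j (h j) = 0 := by
        apply Finset.prod_eq_zero (Finset.mem_univ j)
        rw [hw, if_neg]
        omega
      rw [this, if_neg (by tauto)]
      simp
  · rw [if_neg (by tauto), if_neg (by tauto)]

theorem fiber_map {S M : Type*} [Finite S] (f g : S → M)
    (h : ∀ m, Nat.card {a // f a = m} = Nat.card {a // g a = m}) :
    ∃ φ : S → S, Function.Injective φ ∧ ∀ a, g (φ a) = f a := by
  have e0 : ∀ m, Nonempty ({a // f a = m} ≃ {a // g a = m}) := fun m =>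
    Finite.card_eq.1 (h m)
  have e : ∀ m, {a // f a = m} ≃ {a // g a = m} := fun m => Classical.choice (e0 m)
  refine ⟨fun a => (e (f a) ⟨a, rfl⟩).1, ?_, fun a => (e (f a) ⟨a, rfl⟩).2⟩
  intro a b hab
  simp only at hab
  have hf : f a = f b := by
    rw [← (e (f a) ⟨a, rfl⟩).2, ← (e (f b) ⟨b, rfl⟩).2, hab]
  have key : ∀ (m : M) (p : {a // f a = m}) (q : {a // f a = m}),
      (e m p).1 = (e m q).1 → p.1 = q.1 := fun m p q hpq => by
    rw [(e m).injective (Subtype.ext hpq)]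
  refine key (f b) ⟨a, hf⟩ ⟨b, rfl⟩ ?_
  rw [← hab]
  have : ∀ (m : M) (hm : f a = m), (e m ⟨a, hm⟩).1 = (e (f a) ⟨a, rfl⟩).1 := by
    rintro _ rfl; rfl
  exact this _ hf

theorem one_path {x y : ℕ} (T B : Fin x → Fin (y+1)) (hT : Monotone T) (hB : Monotone B)
    (hTB : ∀ j, B j ≤ T j) : ∃ φ : (Fin x → Fin (y+1)) → (Fin x → Fin (y+1)),
    (∀ h, InP T B h → InP T B (φ h) ∧
      Nat.card {j // T j = φ h j} = Nat.card {j // h j = B j} ∧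
      Nat.card {j // φ h j = B j} = Nat.card {j // T j = h j} ∧
      ∀ s : ℕ, Nat.card {j // (B j : ℕ) < s ∧ s < (T j : ℕ) ∧ (φ h j : ℕ) = s} =
        Nat.card {j // (B j : ℕ) < s ∧ s < (T j : ℕ) ∧ (h j : ℕ) = s}) ∧
    (∀ h h', InP T B h → InP T B h' → φ h = φ h' → h = h') := by
  classical
  let T' : ℕ → ℕ := fun j => if h : j < x then T ⟨j, h⟩ else y
  let B' : ℕ → ℕ := fun j => if h : j < x then B ⟨j, h⟩ else y
  have eT : ∀ j : Fin x, T' j = T j := fun j => by simp [T']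
  have eB : ∀ j : Fin x, B' j = B j := fun j => by simp [B']
  have hT' : Monotone T' := by
    intro i j hij
    by_cases hj : j < x
    · have hi : i < x := by omega
      simp only [T', hi, hj, dif_pos]
      exact hT (show (⟨i, hi⟩ : Fin x) ≤ ⟨j, hj⟩ from hij)
    · simp only [T', hj, dif_neg, not_false_eq_true]
      split_ifs <;> omega
  have hB' : Monotone B' := by
    intro i j hij
    by_cases hj : j < x
    · have hi : i < x := by omega
      simp only [B', hi, hj, dif_pos]
      exact hB (show (⟨i, hi⟩ : Fin x) ≤ ⟨j, hj⟩ from hij)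
    · simp only [B', hj, dif_neg, not_false_eq_true]
      split_ifs <;> omega
  have hTB' : ∀ j, B' j ≤ T' j := by
    intro j
    simp only [B', T']
    split_ifs with h
    · exact hTB _
    · exact le_rfl
  have sym := (GG_sym_aux T' B' (mo (1,0,0)) (mo (0,1,0)) (fun s => mo (0,0,Pi.single s 1))
    hT' hB' hTB' (y+1) x).1 (fun q _ => by
      simp only [T']
      split_ifs <;> omega)
  have hP : ∀ h : Fin x → Fin (y+1), InP T B h ↔
      (Monotone h ∧ ∀ j : Fin x, B' j ≤ h j ∧ h j ≤ T' j) := by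
    intro h
    simp only [eT, eB, InP, Fin.le_def]
  have hc : ∀ m, Nat.card {a : {h // InP T B h} // ∑ j, stw' (T j) (B j) (a.1 j) = m}
      = Nat.card {a : {h // InP T B h} // ∑ j, stw (T j) (B j) (a.1 j) = m} := by
    intro m
    have c1 := coeff_GG (x := x) (y := y) T' B' _ stw (fun p s => wt_stw T' B' p s (hTB' p)) m
    have c2 := coeff_GG (x := x) (y := y) T' B' _ stw' (fun p s => wt_stw' T' B' p s (hTB' p)) m
    rw [sym, c1] at c2
    have c3 := Int.ofNat_inj.1 c2
    simp only [← hP] at c3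
    simp only [eT, eB] at c3
    rw [Nat.card_congr (Equiv.subtypeSubtypeEquivSubtypeInter (InP T B)
        (fun h => ∑ j, stw' (T j) (B j) (h j) = m)),
      Nat.card_congr (Equiv.subtypeSubtypeEquivSubtypeInter (InP T B)
        (fun h => ∑ j, stw (T j) (B j) (h j) = m))]
    exact c3.symm
  obtain ⟨φ, hφ, hφ2⟩ := fiber_map _ _ hc
  refine ⟨fun h => if hh : InP T B h then (φ ⟨h, hh⟩).1 else h, ?_, ?_⟩
  · intro h hh
    simp only [hh, dif_pos]
    have h2 := hφ2 ⟨h, hh⟩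
    generalize φ ⟨h, hh⟩ = ψ at h2 ⊢
    refine ⟨ψ.2, ?_, ?_, ?_⟩
    · have := congrArg Prod.fst h2
      simp only [Prod.fst_sum, stw, stw', ← Fin.ext_iff, Finset.sum_boole, Nat.cast_id] at this
      simp only [Nat.card_eq_fintype_card, Fintype.card_subtype]
      rw [← this]
      simp only [eq_comm]
    · have := congrArg (fun p => p.2.1) h2
      simp only [Prod.fst_sum, Prod.snd_sum, stw, stw', ← Fin.ext_iff, Finset.sum_boole,
        Nat.cast_id] at this
      simp only [Nat.card_eq_fintype_card, Fintype.card_subtype]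
      rw [this]
      simp only [eq_comm]
    · intro s
      have := congrArg (fun p => p.2.2 s) h2
      simp only [Prod.snd_sum, stw, stw', Finset.sum_apply] at this
      simp only [Nat.card_eq_fintype_card, Fintype.card_subtype, Finset.card_filter]
      have aux : ∀ t b r : ℕ, (if b < s ∧ s < t ∧ r = s then 1 else 0) =
          (if b < r ∧ r < t then (Pi.single r 1 : ℕ → ℕ) else 0) s := by
        intro t b r
        by_cases hr : r = s
        · subst hr
          by_cases h1 : b < r ∧ r < t
          · rw [if_pos h1, if_pos (by tauto)]; simp
          · rw [if_neg h1, if_neg (by tauto)]; simp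
        · rw [if_neg (by tauto)]
          split_ifs
          · rw [Pi.single_eq_of_ne (Ne.symm hr)]
          · rfl
      simp only [aux]
      exact this
  · intro h h' hh hh' he
    simp only [hh, hh', dif_pos] at he
    have := hφ (Subtype.ext he)
    exact congrArg Subtype.val this

theorem extP_update_of_ne {x y k : ℕ} (T B : Fin x → Fin (y+1))
    (P : Fin k → Fin x → Fin (y+1)) (i : Fin k) (q : Fin x → Fin (y+1)) (j : Fin (k+2))
    (hj : (j : ℕ) ≠ i + 1) : extP T B (Function.update P i q) j = extP T B P j := by
  unfold extP
  split_ifs with h1 h2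
  · rfl
  · rfl
  · rw [Function.update_of_ne]
    intro h
    have := congrArg Fin.val h
    simp only at this
    omega

theorem extP_eq {x y k : ℕ} (T B : Fin x → Fin (y+1))
    (P : Fin k → Fin x → Fin (y+1)) (i : Fin k) (j : Fin (k+2))
    (hj : (j : ℕ) = i + 1) : extP T B P j = P i := by
  unfold extP
  have := i.isLt
  rw [dif_neg (by omega), dif_neg (by omega)]
  congr 1
  ext
  simp only
  omega

theorem inPk_iff {x y k : ℕ} (hk : 1 ≤ k) (T B : Fin x → Fin (y+1))
    (hT : Monotone T) (hB : Monotone B) (P : Fin k → Fin x → Fin (y+1)) :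
    InPk T B P ↔ (∀ j, Monotone (extP T B P j)) ∧ Antitone (extP T B P) := by
  have e0 : extP T B P 0 = T := by simp [extP]
  have el : extP T B P (Fin.last _) = B := by simp [extP]
  constructor
  · rintro ⟨h1, h2⟩
    refine ⟨fun j => ?_, Fin.antitone_iff_succ_le.2 fun j => ?_⟩
    · unfold extP
      split_ifs
      · exact hT
      · exact hB
      · exact (h1 _).1
    · have hj := j.isLt
      by_cases j0 : (j : ℕ) = 0
      · have : j.castSucc = 0 := by ext; simpa using j0
        rw [this, e0, extP_eq T B P ⟨0, by omega⟩ j.succ (by simp [j0])]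
        exact fun c => ((h1 _).2 c).2
      · by_cases jl : (j : ℕ) = k
        · have : j.succ = Fin.last _ := by ext; simpa using jl
          rw [this, el, extP_eq T B P ⟨k - 1, by omega⟩ j.castSucc (by simp; omega)]
          exact fun c => ((h1 _).2 c).1
        · rw [extP_eq T B P ⟨j - 1, by omega⟩ j.castSucc (by simp; omega),
            extP_eq T B P ⟨j - 1 + 1, by omega⟩ j.succ (by simp; omega)]
          exact fun c => h2 ⟨j - 1, by omega⟩ (by simp only; omega) c
  · rintro ⟨h1, h2⟩
    have e : ∀ i : Fin k, extP T B P i.succ.castSucc = P i := fun i => extP_eq _ _ _ _ _ (by simp)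
    refine ⟨fun i => ⟨e i ▸ h1 _, fun c => ⟨?_, ?_⟩⟩, fun i hi c => ?_⟩
    · have := h2 (Fin.le_last i.succ.castSucc) c
      rwa [el, e] at this
    · have := h2 (Fin.zero_le i.succ.castSucc) c
      rwa [e0, e] at this
    · have := h2 (show i.succ.castSucc ≤ (⟨i+1, hi⟩ : Fin k).succ.castSucc by
        simp [Fin.le_def]) c
      rwa [e, e] at this

theorem ustat_add {x y k : ℕ} (T B : Fin x → Fin (y+1))
    (P : Fin k → Fin x → Fin (y+1)) (hanti : Antitone (extP T B P)) (s : Fin (y-1)) (i : Fin k) :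
    Nat.card {j // (extP T B P i.succ.succ j : ℕ) < y - ((s : ℕ) + 1) ∧
        y - ((s : ℕ) + 1) < (extP T B P i.castSucc.castSucc j : ℕ) ∧
        (P i j : ℕ) = y - ((s : ℕ) + 1)} + ustat T B P s =
    Nat.card {j : Fin x // (B j : ℕ) < y - ((s : ℕ) + 1) ∧ y - ((s : ℕ) + 1) < (T j : ℕ) ∧
      ∀ i' : Fin k, i' ≠ i → (P i' j : ℕ) ≠ y - ((s : ℕ) + 1)} := by
  classical
  unfold ustat
  generalize y - ((s : ℕ) + 1) = t
  have e0 : extP T B P 0 = T := by simp [extP]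
  have el : extP T B P (Fin.last _) = B := by simp [extP]
  have e : ∀ i : Fin k, extP T B P i.succ.castSucc = P i := fun i => extP_eq _ _ _ _ _ (by simp)
  simp only [Nat.card_eq_fintype_card, Fintype.card_subtype]
  rw [← Finset.card_filter_add_card_filter_not (s := Finset.univ.filter (fun j : Fin x =>
    (B j : ℕ) < t ∧ t < (T j : ℕ) ∧ ∀ i' : Fin k, i' ≠ i → (P i' j : ℕ) ≠ t))
    (fun j => (P i j : ℕ) = t)]
  congr 2
  · ext j
    simp only [Finset.mem_filter, Finset.mem_univ, true_and]
    have hle : ∀ a b : Fin (k+2), a ≤ b → (extP T B P b j : ℕ) ≤ extP T B P a j :=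
      fun a b hab => hanti hab j
    have hT0 := hle 0 i.castSucc.castSucc (Fin.zero_le _)
    have hBl := hle i.succ.succ (Fin.last _) (Fin.le_last _)
    rw [e0] at hT0
    rw [el] at hBl
    constructor
    · rintro ⟨h1, h2, h3⟩
      refine ⟨⟨by omega, by omega, fun i' hi' => ?_⟩, h3⟩
      rcases lt_or_gt_of_ne hi' with h | h
      · have := hle i'.succ.castSucc i.castSucc.castSucc (by
          simp only [Fin.le_def, Fin.lt_def] at h ⊢; simp; omega)
        rw [e] at this
        omega
      · have := hle i.succ.succ i'.succ.castSucc (by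
          simp only [Fin.le_def, Fin.lt_def] at h ⊢; simp; omega)
        rw [e] at this
        omega
    · rintro ⟨⟨h1, h2, h3⟩, h4⟩
      have hU := hle i.castSucc.castSucc i.succ.castSucc (by simp [Fin.le_def])
      have hL := hle i.succ.castSucc i.succ.succ (by simp [Fin.le_def])
      rw [e, h4] at hU hL
      refine ⟨lt_of_le_of_ne hL ?_, lt_of_le_of_ne hU ?_, h4⟩
      · have := i.isLt
        by_cases hi : (i : ℕ) + 1 = k
        · have : i.succ.succ = Fin.last _ := by ext; simpa using hi
          rw [this, el]; omega
        · rw [extP_eq T B P ⟨i+1, by omega⟩ _ (by simp)]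
          exact h3 _ (by simp [Fin.ext_iff])
      · have := i.isLt
        by_cases hi : (i : ℕ) = 0
        · have : i.castSucc.castSucc = 0 := by ext; simpa using hi
          rw [this, e0]; omega
        · rw [extP_eq T B P ⟨i-1, by omega⟩ _ (by simp; omega)]
          exact (h3 _ (by simp [Fin.ext_iff]; omega)).symm
  · ext j
    simp only [Finset.mem_filter, Finset.mem_univ, true_and]
    constructor
    · rintro ⟨h1, h2, h3⟩
      exact ⟨⟨h1, h2, fun i' _ => h3 i'⟩, h3 i⟩
    · rintro ⟨⟨h1, h2, h3⟩, h4⟩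
      refine ⟨h1, h2, fun i' => ?_⟩
      by_cases h : i' = i
      · rw [h]; exact h4
      · exact h3 i' h

theorem adj_le {x y : ℕ} (k : ℕ) (hk : 1 ≤ k) (T B : Fin x → Fin (y+1))
    (hT : Monotone T) (hB : Monotone B)
    (u : Fin (y-1) → ℕ) (i : Fin k) (a : Fin (k+1) → ℕ) :
    Nat.card {P : Fin k → Fin x → Fin (y+1) //
        InPk T B P ∧ (∀ s, ustat T B P s = u s) ∧ ∀ i, hstat T B P i = a i}
    ≤ Nat.card {P : Fin k → Fin x → Fin (y+1) //
        InPk T B P ∧ (∀ s, ustat T B P s = u s) ∧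
          ∀ j, hstat T B P j = a (Equiv.swap i.castSucc i.succ j)} := by
  classical
  have ex : ∀ U L : Fin x → Fin (y+1), ∃ φ : (Fin x → Fin (y+1)) → (Fin x → Fin (y+1)),
      Monotone U → Monotone L → (∀ j, L j ≤ U j) →
    (∀ h, InP U L h → InP U L (φ h) ∧
      Nat.card {j // U j = φ h j} = Nat.card {j // h j = L j} ∧
      Nat.card {j // φ h j = L j} = Nat.card {j // U j = h j} ∧
      ∀ s : ℕ, Nat.card {j // (L j : ℕ) < s ∧ s < (U j : ℕ) ∧ (φ h j : ℕ) = s} =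
        Nat.card {j // (L j : ℕ) < s ∧ s < (U j : ℕ) ∧ (h j : ℕ) = s}) ∧
    (∀ h h', InP U L h → InP U L h' → φ h = φ h' → h = h') := by
    intro U L
    by_cases h : Monotone U ∧ Monotone L ∧ ∀ j, L j ≤ U j
    · obtain ⟨φ, hφ⟩ := one_path U L h.1 h.2.1 h.2.2
      exact ⟨φ, fun _ _ _ => hφ⟩
    · exact ⟨id, fun h1 h2 h3 => absurd ⟨h1, h2, h3⟩ h⟩
  choose Φ hΦ using ex
  let U : (Fin k → Fin x → Fin (y+1)) → Fin x → Fin (y+1) := fun P =>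
    extP T B P i.castSucc.castSucc
  let L : (Fin k → Fin x → Fin (y+1)) → Fin x → Fin (y+1) := fun P =>
    extP T B P i.succ.succ
  let F : (Fin k → Fin x → Fin (y+1)) → (Fin k → Fin x → Fin (y+1)) := fun P =>
    Function.update P i (Φ (U P) (L P) (P i))
  have eU : ∀ P q, U (Function.update P i q) = U P := fun P q =>
    extP_update_of_ne T B P i q _ (by simp)
  have eL : ∀ P q, L (Function.update P i q) = L P := fun P q =>
    extP_update_of_ne T B P i q _ (by simp)
  have e : ∀ P : Fin k → Fin x → Fin (y+1), extP T B P i.succ.castSucc = P i :=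
    fun P => extP_eq _ _ _ _ _ (by simp)
  have good : ∀ P, InPk T B P → Monotone (U P) ∧ Monotone (L P) ∧ (∀ j, L P j ≤ U P j) ∧
      InP (U P) (L P) (P i) := by
    intro P hP
    obtain ⟨h1, h2⟩ := (inPk_iff hk T B hT hB P).1 hP
    have hU := h2 (show i.castSucc.castSucc ≤ i.succ.castSucc by simp [Fin.le_def])
    have hL := h2 (show i.succ.castSucc ≤ i.succ.succ by simp [Fin.le_def])
    rw [e] at hU hL
    exact ⟨h1 _, h1 _, fun j => (hL j).trans (hU j), (hP.1 i).1, fun j => ⟨hL j, hU j⟩⟩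
  refine Nat.card_le_card_of_injective (fun P => ⟨F P.1, ?_⟩) ?_
  · obtain ⟨P, hP, hu, ha⟩ := P
    simp only
    obtain ⟨g1, g2, g3, g4⟩ := good P hP
    obtain ⟨f1, f2, f3, f4⟩ := (hΦ _ _ g1 g2 g3).1 _ g4
    obtain ⟨h1, h2⟩ := (inPk_iff hk T B hT hB P).1 hP
    have eF : F P i = Φ (U P) (L P) (P i) := by simp [F]
    have eF1 : ∀ j : Fin (k+2), (j : ℕ) ≠ i + 1 → extP T B (F P) j = extP T B P j := fun j hj =>
      extP_update_of_ne T B P i _ j hj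
    have eF2 : ∀ j : Fin (k+2), (j : ℕ) = i + 1 → extP T B (F P) j = Φ (U P) (L P) (P i) :=
      fun j hj => by rw [extP_eq T B (F P) i j hj, eF]
    have hF : InPk T B (F P) := by
      rw [inPk_iff hk T B hT hB]
      refine ⟨fun j => ?_, Fin.antitone_iff_succ_le.2 fun j => ?_⟩
      · by_cases hj : (j : ℕ) = i + 1
        · rw [eF2 j hj]; exact f1.1
        · rw [eF1 j hj]; exact h1 j
      · by_cases hj1 : j = i.castSucc
        · subst hj1
          rw [eF2 _ (by simp), eF1 _ (by simp)]
          exact fun c => (f1.2 c).2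
        · by_cases hj2 : j = i.succ
          · subst hj2
            rw [eF1 _ (by simp), eF2 _ (by simp)]
            exact fun c => (f1.2 c).1
          · rw [Fin.ext_iff] at hj1 hj2
            simp only [Fin.val_succ, Fin.val_castSucc] at hj1 hj2
            rw [eF1 _ (by simp; omega), eF1 _ (by simp; omega)]
            exact h2 (by simp [Fin.le_def])
    refine ⟨hF, fun s => ?_, fun j => ?_⟩
    · rw [← hu s]
      have k1 := ustat_add T B P h2 s i
      have k2 := ustat_add T B (F P) ((inPk_iff hk T B hT hB _).1 hF).2 s i
      rw [eF1 _ (by simp), eF1 _ (by simp), eF] at k2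
      have k3 := f4 (y - ((s : ℕ) + 1))
      have k4 : ∀ (c : Fin x) (t : ℕ), (∀ i' : Fin k, i' ≠ i → (F P i' c : ℕ) ≠ t) ↔
          (∀ i' : Fin k, i' ≠ i → (P i' c : ℕ) ≠ t) := by
        intro c t
        refine forall_congr' fun i' => forall_congr' fun hi' => ?_
        simp [F, Function.update_of_ne hi']
      simp only [k4] at k2
      rw [← k1] at k2
      simp only [U, L] at k3 k2
      omega
    · by_cases hj1 : j = i.castSucc
      · subst hj1
        rw [Equiv.swap_apply_left, ← ha]
        unfold hstat
        rw [eF2 i.castSucc.succ (by simp), eF1 i.castSucc.castSucc (by simp), e]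
        exact f2
      · by_cases hj2 : j = i.succ
        · subst hj2
          rw [Equiv.swap_apply_right, ← ha]
          unfold hstat
          rw [eF1 i.succ.succ (by simp), eF2 i.succ.castSucc (by simp), extP_eq T B P i i.castSucc.succ (by simp)]
          exact f3
        · rw [Equiv.swap_apply_of_ne_of_ne hj1 hj2, ← ha]
          rw [Fin.ext_iff] at hj1 hj2
          simp only [Fin.val_succ, Fin.val_castSucc] at hj1 hj2
          unfold hstat
          rw [eF1 _ (by simp; omega), eF1 _ (by simp; omega)]
  · rintro ⟨P, hP, _⟩ ⟨Q, hQ, _⟩ h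
    have h : F P = F Q := congrArg Subtype.val h
    apply Subtype.ext
    simp only
    have hQP : Q = Function.update P i (Q i) := by
      funext j
      by_cases hj : j = i
      · subst hj; simp
      · have := congrFun h j
        simp only [F, Function.update_of_ne hj] at this ⊢
        exact this.symm
    have hU : U Q = U P := by rw [hQP, eU]
    have hL : L Q = L P := by rw [hQP, eL]
    obtain ⟨g1, g2, g3, g4⟩ := good P hP
    obtain ⟨_, _, _, g5⟩ := good Q hQ
    have hi := congrFun h i
    simp only [F, Function.update_self] at hi
    rw [hU, hL] at hi g5
    have := (hΦ _ _ g1 g2 g3).2 _ _ g4 g5 hi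
    rw [hQP, ← this]
    simp

/-- For any fixed values of the `u_s` statistics, the joint distribution of
`(h_0, …, h_k)` over `P^k(T,B,u)` is symmetric. -/
theorem stmt5 {x y : ℕ} (k : ℕ) (hk : 1 ≤ k) (T B : Fin x → Fin (y+1))
    (hT : Monotone T) (hB : Monotone B) (hTB : ∀ j, B j ≤ T j)
    (u : Fin (y-1) → ℕ) (σ : Equiv.Perm (Fin (k+1))) (a : Fin (k+1) → ℕ) :
    Nat.card {P : Fin k → Fin x → Fin (y+1) //
        InPk T B P ∧ (∀ s, ustat T B P s = u s) ∧ ∀ i, hstat T B P i = a i}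
    = Nat.card {P : Fin k → Fin x → Fin (y+1) //
        InPk T B P ∧ (∀ s, ustat T B P s = u s) ∧ ∀ i, hstat T B P i = a (σ i)} := by

  have adj : ∀ (i : Fin k) (a : Fin (k+1) → ℕ), 
      Nat.card {P : Fin k → Fin x → Fin (y+1) //
        InPk T B P ∧ (∀ s, ustat T B P s = u s) ∧ ∀ i, hstat T B P i = a i}
      = Nat.card {P : Fin k → Fin x → Fin (y+1) //
        InPk T B P ∧ (∀ s, ustat T B P s = u s) ∧
          ∀ j, hstat T B P j = a (Equiv.swap i.castSucc i.succ j)} := by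
    intro i a
    refine le_antisymm (adj_le k hk T B hT hB u i a) ?_
    have := adj_le k hk T B hT hB u i (fun j => a (Equiv.swap i.castSucc i.succ j))
    simpa only [Equiv.swap_apply_self] using this
  have hσ : σ ∈ Submonoid.closure
      (Set.range fun i : Fin k => Equiv.swap i.castSucc i.succ) := by
    rw [Equiv.Perm.mclosure_swap_castSucc_succ]; trivial
  induction hσ using Submonoid.closure_induction generalizing a with
  | mem τ h =>
    obtain ⟨i, rfl⟩ := h
    exact adj i a
  | one => rfl
  | mul τ ρ _ _ h1 h2 =>
    rw [h1 a, h2 (fun j => a (τ j))]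
    rfl
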